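/- Let R be a Dedekind domain with fraction field F and B' : V' × W' → F a perfect pairing of finite-dimensional F-vector spaces (the induced maps V' → (W')* and W' → (V')* are bijective). Let M ⊆ V' be a finitely generated R-submodule spanning V' over F, and set M^∨ = {w' ∈ W' : B'(x, w') ∈ R for all x ∈ M}. Let S ⊆ V' be an F-subspace and S^⊥ = {w' ∈ W' : B'(s, w') = 0 for all s ∈ S}. Then B' restricts to an R-bilinear pairing (M ∩ S) × (M^∨/(M^∨ ∩ S^⊥)) → R with values in R, and this pairing is perfect: both induced maps M ∩ S → Hom_R(M^∨/(M^∨ ∩ S^⊥), R) and M^∨/(M^∨ ∩ S^⊥) → Hom_R(M ∩ S, R) are bijective. -/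

import Mathlib

/-!
Put `N = M ∩ S`. Everything follows from three facts.

* `N` is saturated in `M`, so `M / N` is finitely generated and torsion-free, hence projective over
  the Dedekind domain `R`; thus there is a retraction `p : M → N` (`exists_retraction`).
* `M` is a full lattice, i.e. `V'` is the localization of `M` at the nonzero elements of `R`, so by
  perfectness of `B'` each `R`-linear form on `M` is `B' · w` for some `w ∈ M^∨`
  (`exists_represents`). Composing with `p`, so is each form on `N`.
* A vector `w` orthogonal to `N` is orthogonal to `S`, because each `s ∈ S` has a nonzero
  multiple in `N` (`orth_of_orth_inf`).

The last two say that `M^∨ / (M^∨ ∩ S^⊥) → Hom(N, R)` is bijective. Since `N` is finitely generated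
and projective, it is reflexive, so the map `N → Hom(M^∨ / (M^∨ ∩ S^⊥), R)` is bijective too.
-/

/-- The "dual lattice" `M^∨` of an `R`-submodule `M ⊆ V'` with respect to a pairing
`B' : V' × W' → F`: the set of `w' ∈ W'` such that `B' x w'` lies in (the image of)
`R` for all `x ∈ M`. -/
def dualLattice' (R : Type*) [CommRing R] (F : Type*) [Field F] [Algebra R F]
    {V' W' : Type*} [AddCommGroup V'] [Module F V'] [Module R V'] [IsScalarTower R F V']
    [AddCommGroup W'] [Module F W'] [Module R W'] [IsScalarTower R F W']
    (B' : V' →ₗ[F] W' →ₗ[F] F) (M : Submodule R V') : Submodule R W' :=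
  ⨅ (x : V') (_ : x ∈ M),
    Submodule.comap ((B' x).restrictScalars R)
      (LinearMap.range (Algebra.linearMap R F))

/-- The orthogonal complement `S^⊥ ⊆ W'` of an `F`-subspace `S ⊆ V'` with respect to
a pairing `B' : V' × W' → F`. -/
def orthCompl {F V' W' : Type*} [Field F]
    [AddCommGroup V'] [Module F V'] [AddCommGroup W'] [Module F W']
    (B' : V' →ₗ[F] W' →ₗ[F] F) (S : Submodule F V') : Submodule F W' :=
  ⨅ (s : V') (_ : s ∈ S), LinearMap.ker (B' s)

open scoped nonZeroDivisors

section Helpers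

variable {R : Type*} [CommRing R] {F : Type*} [Field F] [Algebra R F]
  {V' W' : Type*} [AddCommGroup V'] [Module F V'] [Module R V'] [IsScalarTower R F V']
  [AddCommGroup W'] [Module F W'] [Module R W'] [IsScalarTower R F W']

lemma mem_dualLattice'_iff (B' : V' →ₗ[F] W' →ₗ[F] F) (M : Submodule R V') (w : W') :
    w ∈ dualLattice' R F B' M ↔ ∀ x ∈ M, ∃ r : R, algebraMap R F r = B' x w := by
  simp [dualLattice', Submodule.mem_iInf]

lemma mem_orthCompl_iff (B' : V' →ₗ[F] W' →ₗ[F] F) (S : Submodule F V') (w : W') :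
    w ∈ orthCompl B' S ↔ ∀ s ∈ S, B' s w = 0 := by
  simp [orthCompl, Submodule.mem_iInf]

variable [IsFractionRing R F]

lemma exists_smul_mem [IsDomain R] (M : Submodule R V')
    (hspan : Submodule.span F (M : Set V') = ⊤) (v : V') :
    ∃ r : R, r ≠ 0 ∧ r • v ∈ M := by
  have hv : v ∈ Submodule.span F (M : Set V') := hspan ▸ Submodule.mem_top
  induction hv using Submodule.span_induction with
  | mem x hx => exact ⟨1, one_ne_zero, by simpa using hx⟩
  | zero => exact ⟨1, one_ne_zero, by simp⟩
  | add x y _ _ hx hy =>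
    obtain ⟨a, ha, hax⟩ := hx
    obtain ⟨b, hb, hby⟩ := hy
    refine ⟨a * b, mul_ne_zero ha hb, ?_⟩
    rw [smul_add]
    refine M.add_mem ?_ ?_
    · rw [mul_comm, mul_smul]; exact M.smul_mem b hax
    · rw [mul_smul]; exact M.smul_mem a hby
  | smul c x _ hx =>
    obtain ⟨a, ha, hax⟩ := hx
    obtain ⟨n, d, hd, rfl⟩ := IsFractionRing.div_surjective (A := R) c
    have hd0 : algebraMap R F d ≠ 0 := IsFractionRing.to_map_ne_zero_of_mem_nonZeroDivisors hd
    refine ⟨d * a, mul_ne_zero (nonZeroDivisors.ne_zero hd) ha, ?_⟩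
    have : (d * a) • (algebraMap R F n / algebraMap R F d) • x = n • a • x := by
      simp only [← IsScalarTower.algebraMap_smul F (_ : R), smul_smul, map_mul]
      congr 1
      field_simp
    rw [this]
    exact M.smul_mem n hax

/-- A full lattice `M ⊆ V'` exhibits `V'` as its localization at the nonzero elements of `R`. -/
lemma isLocalizedModule_subtype [IsDomain R] (M : Submodule R V')
    (hspan : Submodule.span F (M : Set V') = ⊤) : IsLocalizedModule R⁰ M.subtype where
  map_units := by
    intro c
    have hc : algebraMap R F c ≠ 0 := IsFractionRing.to_map_ne_zero_of_mem_nonZeroDivisors c.2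
    rw [Module.End.isUnit_iff]
    constructor
    · intro x y h
      simp only [Module.algebraMap_end_apply, ← IsScalarTower.algebraMap_smul F (c : R)] at h
      exact smul_right_injective V' hc h
    · intro y
      refine ⟨(algebraMap R F c)⁻¹ • y, ?_⟩
      rw [Module.algebraMap_end_apply, ← IsScalarTower.algebraMap_smul F (c : R),
        smul_inv_smul₀ hc]
  surj := by
    intro y
    obtain ⟨r, hr, h⟩ := exists_smul_mem M hspan y
    exact ⟨(⟨r • y, h⟩, ⟨r, mem_nonZeroDivisors_of_ne_zero hr⟩), rfl⟩
  exists_of_eq := fun h => ⟨1, by rw [Subtype.ext h]⟩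

/-- Every `R`-linear form on the full lattice `M` is pairing with a vector of `M^∨`. -/
lemma exists_represents [IsDomain R] (B' : V' →ₗ[F] W' →ₗ[F] F) (hB' : Function.Surjective B'.flip)
    (M : Submodule R V') (hspan : Submodule.span F (M : Set V') = ⊤) (φ : M →ₗ[R] R) :
    ∃ w ∈ dualLattice' R F B' M, ∀ x : M, B' x w = algebraMap R F (φ x) := by
  have := isLocalizedModule_subtype M hspan
  have hu : ∀ c : R⁰, IsUnit (algebraMap R (Module.End R F) c) :=
    IsLocalizedModule.map_units (Algebra.linearMap R F)
  let ψ : V' →ₗ[R] F := IsLocalizedModule.lift R⁰ M.subtype (Algebra.linearMap R F ∘ₗ φ) hu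
  obtain ⟨w, hw⟩ := hB' (ψ.extendScalarsOfIsLocalization R⁰ F)
  have key : ∀ x : M, B' x w = algebraMap R F (φ x) := by
    intro x
    have h1 : B' x w = ψ x := by
      rw [← LinearMap.flip_apply, hw]; rfl
    rw [h1]
    exact IsLocalizedModule.lift_apply R⁰ M.subtype (Algebra.linearMap R F ∘ₗ φ) hu x
  exact ⟨w, (mem_dualLattice'_iff B' M w).2 fun x hx => ⟨φ ⟨x, hx⟩, (key ⟨x, hx⟩).symm⟩, key⟩

lemma orth_of_orth_inf [IsDomain R]
    {W' : Type*} [AddCommGroup W'] [Module F W'] (B' : V' →ₗ[F] W' →ₗ[F] F) (M : Submodule R V')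
    (hspan : Submodule.span F (M : Set V') = ⊤) (S : Submodule F V') (w : W')
    (h : ∀ x ∈ M ⊓ S.restrictScalars R, B' x w = 0) : w ∈ orthCompl B' S := by
  rw [mem_orthCompl_iff]
  intro s hs
  obtain ⟨r, hr, hrs⟩ := exists_smul_mem M hspan s
  have h0 := h (r • s) ⟨hrs, (S.restrictScalars R).smul_mem r hs⟩
  rw [← IsScalarTower.algebraMap_smul F r s, map_smul, LinearMap.smul_apply, smul_eq_mul] at h0
  exact (mul_eq_zero.1 h0).resolve_left (by simpa using hr)

variable (F) in
lemma isTorsionFree_of_isScalarTower [IsDomain R] (V : Type*) [AddCommGroup V] [Module F V]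
    [Module R V] [IsScalarTower R F V] : Module.IsTorsionFree R V := by
  have : Module.IsTorsionFree R F := inferInstance
  exact Module.IsTorsionFree.trans_faithfulSMul R F V

lemma projective_of_isTorsionFree [IsDedekindDomain R] (M : Type*) [AddCommGroup M] [Module R M]
    [Module.Finite R M] [Module.IsTorsionFree R M] : Module.Projective R M := by
  have : Module.FinitePresentation R M := Module.finitePresentation_of_finite R M
  exact Module.Flat.projective_of_finitePresentation

/-- `M ∩ S` is a direct summand of `M`, since `M / (M ∩ S)` is projective: it is finitely
generated, and torsion-free because it embeds into the `F`-vector space `V' / S`. -/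
lemma exists_retraction [IsDedekindDomain R] (M : Submodule R V') (hfg : M.FG)
    (S : Submodule F V') :
    ∃ p : M →ₗ[R] ↥(M ⊓ S.restrictScalars R),
      ∀ (x : V') (hx : x ∈ M ⊓ S.restrictScalars R), p ⟨x, hx.1⟩ = ⟨x, hx⟩ := by
  have : Module.Finite R M := Module.Finite.iff_fg.2 hfg
  let K : Submodule R M := (S.restrictScalars R).comap M.subtype
  let e : (M ⧸ K) →ₗ[R] (V' ⧸ S) :=
    K.liftQ ((S.mkQ.restrictScalars R) ∘ₗ M.subtype) (by
      intro x hx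
      simpa [K] using hx)
  have he : Function.Injective e := by
    rw [← LinearMap.ker_eq_bot, Submodule.ker_liftQ_eq_bot]
    intro x hx
    simpa [K] using hx
  have : Module.IsTorsionFree R (V' ⧸ S) := isTorsionFree_of_isScalarTower F _
  have : Module.IsTorsionFree R (M ⧸ K) := he.moduleIsTorsionFree e (map_smul e)
  have : Module.Projective R (M ⧸ K) := projective_of_isTorsionFree _
  obtain ⟨s, hs⟩ := Module.projective_lifting_property K.mkQ LinearMap.id K.mkQ_surjective
  have hmem : ∀ x : M, (M.subtype ∘ₗ (LinearMap.id - s ∘ₗ K.mkQ)) x ∈ M ⊓ S.restrictScalars R := by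
    intro x
    refine ⟨(x - s (K.mkQ x)).2, ?_⟩
    have : x - s (K.mkQ x) ∈ K := by
      refine (Submodule.Quotient.eq K).1 ?_
      exact (LinearMap.congr_fun hs (K.mkQ x)).symm
    exact this
  refine ⟨LinearMap.codRestrict _ _ hmem, fun x hx => ?_⟩
  have h0 : K.mkQ ⟨x, hx.1⟩ = 0 := by
    rw [← LinearMap.mem_ker, Submodule.ker_mkQ]
    exact hx.2
  ext
  simp [h0, -Submodule.mkQ_apply]

end Helpers

/-- Let `R` be a Dedekind domain with fraction field `F`, `B' : V' × W' → F` a perfect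
pairing of finite-dimensional `F`-vector spaces, `M ⊆ V'` a finitely generated
`R`-submodule spanning `V'`, and `S ⊆ V'` an `F`-subspace. Then `B'` restricts to a
perfect `R`-bilinear pairing `(M ∩ S) × (M^∨/(M^∨ ∩ S^⊥)) → R`. -/
theorem restricted_pairing_perfect
    (R : Type*) [CommRing R] [IsDomain R] [IsDedekindDomain R]
    (F : Type*) [Field F] [Algebra R F] [IsFractionRing R F]
    (V' W' : Type*)
    [AddCommGroup V'] [Module F V'] [Module R V'] [IsScalarTower R F V']
    [FiniteDimensional F V']
    [AddCommGroup W'] [Module F W'] [Module R W'] [IsScalarTower R F W']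
    [FiniteDimensional F W']
    (B' : V' →ₗ[F] W' →ₗ[F] F)
    (hB'₁ : Function.Bijective B') (hB'₂ : Function.Bijective B'.flip)
    (M : Submodule R V') (hfg : M.FG) (hspan : Submodule.span F (M : Set V') = ⊤)
    (S : Submodule F V') :
    (∀ w' : W', w' ∈ dualLattice' R F B' M ↔
        ∀ x ∈ M, ∃ r : R, algebraMap R F r = B' x w') ∧
    (∀ w' : W', w' ∈ orthCompl B' S ↔ ∀ s ∈ S, B' s w' = 0) ∧
    ∃ P : ↥(M ⊓ S.restrictScalars R) →ₗ[R]
        (↥(dualLattice' R F B' M) ⧸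
          (dualLattice' R F B' M ⊓ (orthCompl B' S).restrictScalars R).comap
            (dualLattice' R F B' M).subtype) →ₗ[R] R,
      (∀ (x : ↥(M ⊓ S.restrictScalars R)) (w' : dualLattice' R F B' M),
        algebraMap R F (P x (Submodule.Quotient.mk w')) = B' (x : V') (w' : W')) ∧
      Function.Bijective P ∧ Function.Bijective P.flip := by
  have hinj : Function.Injective (algebraMap R F) := IsFractionRing.injective R F
  refine ⟨mem_dualLattice'_iff B' M, mem_orthCompl_iff B' S, ?_⟩
  set D := dualLattice' R F B' M with hD
  set N := M ⊓ S.restrictScalars R with hN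
  set K := (D ⊓ (orthCompl B' S).restrictScalars R).comap D.subtype with hK
  have hval : ∀ (x : N) (w : D), ∃ r : R, algebraMap R F r = B' x w := fun x w =>
    (mem_dualLattice'_iff B' M w).1 w.2 x x.2.1
  choose val hval using hval
  have hBr' : ∀ (r : R) (x : V') (w : W'), B' x (r • w) = algebraMap R F r * B' x w := by
    intro r x w
    rw [← IsScalarTower.algebraMap_smul F r w, map_smul, smul_eq_mul]
  let Q : N →ₗ[R] D →ₗ[R] R := LinearMap.mk₂ R val
    (fun x y w => hinj (by simp [hval]))
    (fun r x w => hinj (by simp [hval, Algebra.smul_def]))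
    (fun x w z => hinj (by simp [hval]))
    (fun r x w => hinj (by simp [hval, hBr']))
  let P : N →ₗ[R] (D ⧸ K) →ₗ[R] R := (K.liftQ Q.flip (by
    intro w hw
    ext x
    apply hinj
    have : B' x w = 0 := (mem_orthCompl_iff B' S w).1 hw.2 x x.2.2
    simpa [Q, hval] using this)).flip
  have hP : ∀ (x : N) (w : D), algebraMap R F (P x (Submodule.Quotient.mk w)) = B' x w :=
    fun x w => hval x w
  obtain ⟨p, hp⟩ := exists_retraction M hfg S
  -- every `R`-linear form on `N` is pairing with an element of `D`
  have hrep : ∀ ψ : N →ₗ[R] R, ∃ w : D, ∀ x : N, P x (Submodule.Quotient.mk w) = ψ x := by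
    intro ψ
    obtain ⟨w, hw, hw'⟩ := exists_represents B' hB'₂.2 M hspan (ψ ∘ₗ p)
    refine ⟨⟨w, hw⟩, fun x => hinj ?_⟩
    rw [hP, hw' ⟨x, x.2.1⟩, LinearMap.comp_apply, hp x x.2]
  have hflip_inj : Function.Injective P.flip := by
    rw [← LinearMap.ker_eq_bot, LinearMap.ker_eq_bot']
    intro q hq
    obtain ⟨w, rfl⟩ := Submodule.Quotient.mk_surjective _ q
    rw [Submodule.Quotient.mk_eq_zero]
    refine ⟨w.2, orth_of_orth_inf B' M hspan S w fun x hx => ?_⟩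
    have := LinearMap.congr_fun hq ⟨x, hx⟩
    rw [LinearMap.flip_apply] at this
    rw [← hP ⟨x, hx⟩ w, this, LinearMap.zero_apply, map_zero]
  have hflip_surj : Function.Surjective P.flip := by
    intro ψ
    obtain ⟨w, hw⟩ := hrep ψ
    exact ⟨Submodule.Quotient.mk w, LinearMap.ext hw⟩
  have : Module.Finite R M := Module.Finite.iff_fg.2 hfg
  have : Module.Finite R N := Module.Finite.of_injective (Submodule.inclusion inf_le_left)
    (Submodule.inclusion_injective _)
  have : Module.IsTorsionFree R V' := isTorsionFree_of_isScalarTower F V'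
  have : Module.Projective R N := projective_of_isTorsionFree N
  -- `N` is reflexive, so bijectivity on one side implies it on the other
  have hperf : P.flip.IsPerfPair := .of_bijective P.flip ⟨hflip_inj, hflip_surj⟩
  exact ⟨P, hP, hperf.bijective_right, hflip_inj, hflip_surj⟩
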